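/- If d = 2, then G_λ(0, 0) ~ γ_2 ln(1/λ) as λ → 0+; that is, lim_{λ→0+} G_λ(0, 0)/ln(1/λ) = γ_2. -/

import Mathlib

open MeasureTheory Real Filter Topology Asymptotics

/-- Fourier symbol `φ(θ) = ∑_z a(z) cos⟨z,θ⟩` of the random walk on `ℤ^d`. -/
noncomputable def phiSymb (d : ℕ) (a : (Fin d → ℤ) → ℝ) (θ : Fin d → ℝ) : ℝ :=
  ∑' z : Fin d → ℤ, a z * Real.cos (∑ i, (z i : ℝ) * θ i)

/-- Transition probability `p(t;x,y) = (2π)^{-d} ∫_{[-π,π]^d} e^{φ(θ)t} cos⟨θ,y-x⟩ dθ`. -/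
noncomputable def ptrans (d : ℕ) (a : (Fin d → ℤ) → ℝ) (t : ℝ) (x y : Fin d → ℤ) : ℝ :=
  ((2 * π) ^ d)⁻¹ *
    ∫ θ in Set.Icc (fun _ : Fin d => -π) (fun _ : Fin d => π),
      Real.exp (phiSymb d a θ * t) * Real.cos (∑ i, θ i * ((y i : ℝ) - (x i : ℝ)))

/-- Laplace transform `G_λ(x,y) = ∫_0^∞ e^{-λt} p(t;x,y) dt` (Green's function at `λ = 0`). -/
noncomputable def Glam (d : ℕ) (a : (Fin d → ℤ) → ℝ) (lam : ℝ) (x y : Fin d → ℤ) : ℝ :=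
  ∫ t in Set.Ioi (0 : ℝ), Real.exp (-lam * t) * ptrans d a t x y

/-- Hessian matrix `φ''(0)`, with entries `-∑_z a(z) z_i z_j`. -/
noncomputable def hessPhi (d : ℕ) (a : (Fin d → ℤ) → ℝ) : Matrix (Fin d) (Fin d) ℝ :=
  Matrix.of fun i j => -∑' z : Fin d → ℤ, a z * (z i : ℝ) * (z j : ℝ)

/-- `γ_d = (2π)^{-d/2} |det φ''(0)|^{-1/2}`. -/
noncomputable def gammaConst (d : ℕ) (a : (Fin d → ℤ) → ℝ) : ℝ :=
  ((2 * π) ^ ((d : ℝ) / 2))⁻¹ * (Real.sqrt |(hessPhi d a).det|)⁻¹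

/-- `ρ_d(x) = (a/(2π)^d) ∫_{[-π,π]^d} (cos⟨x,θ⟩ - 1)/φ(θ) dθ` for `x ≠ 0`, and `ρ_d(0) = 1`. -/
noncomputable def rhoConst (d : ℕ) (a : (Fin d → ℤ) → ℝ) (x : Fin d → ℤ) : ℝ :=
  if x = 0 then 1 else
    (-(a 0) / (2 * π) ^ d) *
      ∫ θ in Set.Icc (fun _ : Fin d => -π) (fun _ : Fin d => π),
        (Real.cos (∑ i, (x i : ℝ) * θ i) - 1) / phiSymb d a θ

/-- `γ̃_d(z) = (1/(2(2π)^d)) ∫_{ℝ^d} ⟨v,z⟩² e^{⟨φ''(0)v,v⟩/2} dv`. -/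
noncomputable def gammaTilde (d : ℕ) (a : (Fin d → ℤ) → ℝ) (z : Fin d → ℤ) : ℝ :=
  (2 * (2 * π) ^ d)⁻¹ *
    ∫ v : Fin d → ℝ, (∑ i, v i * (z i : ℝ)) ^ 2 *
      Real.exp ((∑ i, (hessPhi d a).mulVec v i * v i) / 2)

/-! Rescaling the frequency by `θ = u / √t` turns `√t ^ d * p(t; x, y)` into an integral whose
integrand converges to `exp (⟨u, φ''(0) u⟩ / 2)`. Irreducibility makes `φ` bounded above by a
negative multiple of `‖θ‖²` on the whole cube, which both dominates these integrands and makes the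
limit Gaussian integrable; hence the local limit theorem `√t ^ d * p(t; x, y) → γ_d`. In dimension
two, `p(t) ~ γ₂ / t`, and the substitution `t = λ ^ (-s)` spreads the divergence of the Laplace
transform evenly over `0 < s < 1`: after division by `log (1 / λ)` the integrand
`exp (-λ t) * t * p(t)` tends to `γ₂` for `0 < s < 1` and to `0` for `s < 0` and `s > 1`. -/

section Laplace

lemma integral_Ioi_zero_eq_integral_comp_exp_mul {E : Type*} [NormedAddCommGroup E]
    [NormedSpace ℝ E] (f : ℝ → E) {L : ℝ} (hL : 0 < L) :
    ∫ t in Set.Ioi (0 : ℝ), f t = ∫ s, (L * exp (L * s)) • f (exp (L * s)) := by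
  have himage : (fun s => exp (L * s)) '' Set.univ = Set.Ioi 0 := by
    rw [Set.image_univ, ← range_exp]
    exact (mul_left_surjective₀ hL.ne').range_comp exp
  have hderiv (s : ℝ) : HasDerivAt (fun s => exp (L * s)) (L * exp (L * s)) s := by
    simpa [mul_comm] using ((hasDerivAt_id' s).const_mul L).exp
  have hinj : Function.Injective fun s => exp (L * s) :=
    exp_injective.comp (mul_right_injective₀ hL.ne')
  rw [← himage, integral_image_eq_integral_abs_deriv_smul MeasurableSet.univ
    (fun s _ => (hderiv s).hasDerivWithinAt) hinj.injOn, setIntegral_univ]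
  simp only [abs_of_pos (mul_pos hL (exp_pos _))]

lemma integrable_exp_neg_abs : Integrable fun s : ℝ => exp (-|s|) := by
  rw [← integrableOn_univ, ← Set.Iic_union_Ioi (a := (0 : ℝ))]
  refine IntegrableOn.union ?_ ?_
  · exact (integrableOn_exp_Iic 0).congr_fun
      (fun s hs => by simp [abs_of_nonpos (Set.mem_Iic.1 hs)]) measurableSet_Iic
  · exact (integrableOn_exp_neg_Ioi 0).congr_fun
      (fun s hs => by simp [abs_of_pos (Set.mem_Ioi.1 hs)]) measurableSet_Ioi

lemma exists_abs_mul_le_mul_min {p : ℝ → ℝ} {γ C : ℝ} (hp : ∀ t, 0 < t → |p t| ≤ C)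
    (hlim : Tendsto (fun t => t * p t) atTop (𝓝 γ)) :
    ∃ K, ∀ t, 0 < t → |t * p t| ≤ K * min 1 t := by
  have hC : 0 ≤ C := (abs_nonneg _).trans (hp 1 one_pos)
  have hsmall (t : ℝ) (ht : 0 < t) : |t * p t| ≤ C * t := by
    rw [abs_mul, abs_of_pos ht, mul_comm]
    gcongr
    exact hp t ht
  obtain ⟨T, hT⟩ := eventually_atTop.1 (hlim.abs.eventually_le_const (lt_add_one |γ|))
  refine ⟨max (C * max 1 T) (|γ| + 1), fun t ht => ?_⟩
  rcases le_total t 1 with h1 | h1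
  · rw [min_eq_right h1]
    refine (hsmall t ht).trans ?_
    gcongr
    exact (le_mul_of_one_le_right hC (le_max_left _ _)).trans (le_max_left _ _)
  rw [min_eq_left h1, mul_one]
  rcases le_total T t with h | h
  · exact (hT t h).trans (le_max_right _ _)
  · refine (hsmall t ht).trans (le_trans ?_ (le_max_left _ _))
    gcongr
    exact h.trans (le_max_right _ _)

lemma exp_neg_exp_mul_min_le {L : ℝ} (hL : 1 ≤ L) (s : ℝ) :
    exp (-exp (L * (s - 1))) * min 1 (exp (L * s)) ≤ exp (1 - |s|) := by
  rcases le_total s 0 with hs | hs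
  · calc _ ≤ 1 * exp (L * s) := by
          gcongr
          · exact exp_le_one_iff.2 (neg_nonpos.2 (exp_pos _).le)
          · exact min_le_right _ _
      _ ≤ _ := by
          rw [one_mul, abs_of_nonpos hs, exp_le_exp]
          nlinarith
  · calc _ ≤ exp (-exp (L * (s - 1))) * 1 := by
          gcongr
          exact min_le_left _ _
      _ ≤ _ := by
          rw [mul_one, abs_of_nonneg hs, exp_le_exp]
          rcases le_total s 1 with h | h
          · linarith [exp_pos (L * (s - 1))]
          · nlinarith [add_one_le_exp (L * (s - 1))]

lemma tendsto_exp_neg_exp_mul_comp_exp {g : ℝ → ℝ} {γ : ℝ} (hzero : Tendsto g (𝓝[>] 0) (𝓝 0))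
    (htop : Tendsto g atTop (𝓝 γ)) {s : ℝ} (hs₀ : s ≠ 0) (hs₁ : s ≠ 1) :
    Tendsto (fun L => exp (-exp (L * (s - 1))) * g (exp (L * s))) atTop
      (𝓝 ((Set.Ioo (0 : ℝ) 1).indicator (fun _ => γ) s)) := by
  have hneg {r : ℝ} (hr : r < 0) : Tendsto (fun L => exp (L * r)) atTop (𝓝[>] 0) :=
    tendsto_exp_atBot_nhdsGT.comp (tendsto_id.atTop_mul_const_of_neg hr)
  have hpos {r : ℝ} (hr : 0 < r) : Tendsto (fun L => exp (L * r)) atTop atTop :=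
    tendsto_exp_atTop.comp (tendsto_id.atTop_mul_const hr)
  have hone (h : s < 1) : Tendsto (fun L => exp (-exp (L * (s - 1)))) atTop (𝓝 1) := by
    simpa using ((hneg (sub_neg.2 h)).mono_right nhdsWithin_le_nhds).neg.rexp
  rcases hs₀.lt_or_gt with h₀ | h₀
  · simpa [h₀.le] using (hone (h₀.trans one_pos)).mul (hzero.comp (hneg h₀))
  rcases hs₁.lt_or_gt with h₁ | h₁
  · simpa [h₀, h₁] using (hone h₁).mul (htop.comp (hpos h₀))
  · simpa [h₁.le] using
      (tendsto_exp_neg_atTop_nhds_zero.comp (hpos (sub_pos.2 h₁))).mul (htop.comp (hpos h₀))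

lemma tendsto_integral_exp_neg_exp_mul_comp_exp {g : ℝ → ℝ} {γ K : ℝ} (hg : Measurable g)
    (hbound : ∀ t, 0 < t → |g t| ≤ K * min 1 t) (htop : Tendsto g atTop (𝓝 γ)) :
    Tendsto (fun L => ∫ s, exp (-exp (L * (s - 1))) * g (exp (L * s))) atTop (𝓝 γ) := by
  have hK : 0 ≤ K := by simpa using (abs_nonneg _).trans (hbound 1 one_pos)
  have hzero : Tendsto g (𝓝[>] 0) (𝓝 0) := by
    have hmin : Tendsto (fun t : ℝ => K * min 1 t) (𝓝[>] 0) (𝓝 0) := by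
      refine Tendsto.mono_left ?_ nhdsWithin_le_nhds
      exact Continuous.tendsto' (by fun_prop) _ _ (by simp)
    exact squeeze_zero_norm' (eventually_mem_nhdsWithin.mono hbound) hmin
  have hlimit : ∫ s, (Set.Ioo (0 : ℝ) 1).indicator (fun _ => γ) s = γ := by
    simp [integral_indicator measurableSet_Ioo]
  rw [← hlimit]
  refine tendsto_integral_filter_of_dominated_convergence (fun s => K * exp (1 - |s|))
    (.of_forall fun L => Measurable.aestronglyMeasurable (by fun_prop)) ?_ ?_ ?_
  · filter_upwards [eventually_ge_atTop 1] with L hL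
    refine .of_forall fun s => ?_
    rw [norm_mul, norm_of_nonneg (exp_pos _).le]
    calc _ ≤ exp (-exp (L * (s - 1))) * (K * min 1 (exp (L * s))) := by
          gcongr
          exact hbound _ (exp_pos _)
      _ = K * (exp (-exp (L * (s - 1))) * min 1 (exp (L * s))) := by ring
      _ ≤ _ := by
          gcongr
          exact exp_neg_exp_mul_min_le hL s
  · simp only [sub_eq_add_neg, exp_add]
    exact (integrable_exp_neg_abs.const_mul _).const_mul _
  · filter_upwards [Measure.ae_ne volume 0, Measure.ae_ne volume 1] with s hs₀ hs₁
    exact tendsto_exp_neg_exp_mul_comp_exp hzero htop hs₀ hs₁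

lemma tendsto_laplace_div_log {p : ℝ → ℝ} {γ C : ℝ} (hp : Measurable p)
    (hbound : ∀ t, 0 < t → |p t| ≤ C) (hlim : Tendsto (fun t => t * p t) atTop (𝓝 γ)) :
    Tendsto (fun lam : ℝ => (∫ t in Set.Ioi (0 : ℝ), exp (-lam * t) * p t) / log (1 / lam))
      (𝓝[>] (0 : ℝ)) (𝓝 γ) := by
  obtain ⟨K, hK⟩ := exists_abs_mul_le_mul_min hbound hlim
  have hint := tendsto_integral_exp_neg_exp_mul_comp_exp (by fun_prop) hK hlim
  have hlog : Tendsto (fun lam : ℝ => log (1 / lam)) (𝓝[>] 0) atTop := by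
    simp only [one_div]
    exact tendsto_log_atTop.comp tendsto_inv_nhdsGT_zero
  refine (hint.comp hlog).congr' ?_
  filter_upwards [self_mem_nhdsWithin, hlog.eventually_gt_atTop 0] with lam hlam hL
  have hlam_eq : lam = exp (-log (1 / lam)) := by
    rw [one_div, log_inv, neg_neg, exp_log hlam]
  rw [integral_Ioi_zero_eq_integral_comp_exp_mul _ hL, eq_div_iff hL.ne', Function.comp_apply,
    ← integral_mul_const]
  congr 1 with s
  have hexp : -lam * exp (log (1 / lam) * s) = -exp (log (1 / lam) * (s - 1)) := by
    nth_rewrite 1 [hlam_eq]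
    rw [neg_mul, ← exp_add]
    ring_nf
  rw [hexp, smul_eq_mul]
  ring

end Laplace

section Gaussian

open Matrix

variable {ι : Type*} [Fintype ι]

lemma integrable_exp_neg_mul_dotProduct_self {c : ℝ} (hc : 0 < c) :
    Integrable fun u : ι → ℝ => exp (-(c * (u ⬝ᵥ u))) := by
  have h := Integrable.fintype_prod (μ := fun _ : ι => (volume : Measure ℝ))
    (f := fun (_ : ι) (v : ℝ) => exp (-c * v ^ 2)) fun _ => integrable_exp_neg_mul_sq hc
  simpa only [← exp_sum, ← Finset.mul_sum, neg_mul, Finset.sum_neg_distrib, dotProduct, ← sq]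
    using! h

lemma integral_exp_neg_dotProduct_self_div_two :
    ∫ u : ι → ℝ, exp (-(u ⬝ᵥ u) / 2) = √(2 * π) ^ Fintype.card ι := by
  have hprod (u : ι → ℝ) : exp (-(u ⬝ᵥ u) / 2) = ∏ i, exp (-(1 / 2) * u i ^ 2) := by
    rw [← exp_sum, ← Finset.mul_sum, dotProduct]
    simp only [← sq]
    ring_nf
  simp only [hprod]
  rw [integral_fintype_prod_volume_eq_pow (fun v : ℝ => exp (-(1 / 2) * v ^ 2)), integral_gaussian]
  ring_nf

variable [DecidableEq ι]

lemma integral_comp_mulVec {E : Type*} [NormedAddCommGroup E] [NormedSpace ℝ E]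
    {B : Matrix ι ι ℝ} (hB : B.det ≠ 0) (f : (ι → ℝ) → E) :
    ∫ u, f (B *ᵥ u) = |B.det|⁻¹ • ∫ u, f u := by
  have hemb : MeasurableEmbedding (toLin' B) :=
    (B.toLinearEquiv' (B.invertibleOfIsUnitDet hB.isUnit)).toContinuousLinearEquiv.toHomeomorph
      |>.measurableEmbedding
  calc ∫ u, f (B *ᵥ u) = ∫ u, f u ∂volume.map (toLin' B) := (hemb.integral_map f).symm
    _ = |B.det|⁻¹ • ∫ u, f u := by
      rw [map_matrix_volume_pi_eq_smul_volume_pi hB, integral_smul_measure,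
        ENNReal.toReal_ofReal (abs_nonneg _), abs_inv]

open scoped MatrixOrder in
lemma integral_exp_neg_quadratic_div_two {M : Matrix ι ι ℝ} (hM : M.PosDef) :
    ∫ u : ι → ℝ, exp (-(u ⬝ᵥ M *ᵥ u) / 2) = (√M.det)⁻¹ * √(2 * π) ^ Fintype.card ι := by
  obtain ⟨B, hB, rfl⟩ := CStarAlgebra.isStrictlyPositive_iff_eq_star_mul_self.1
    hM.isStrictlyPositive
  have hquad (u : ι → ℝ) : u ⬝ᵥ (star B * B) *ᵥ u = (B *ᵥ u) ⬝ᵥ (B *ᵥ u) := by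
    rw [← mulVec_mulVec, dotProduct_mulVec, star_eq_conjTranspose,
      conjTranspose_eq_transpose_of_trivial, vecMul_transpose]
  have hdet : √(star B * B).det = |B.det| := by
    rw [det_mul, star_eq_conjTranspose, det_conjTranspose, star_trivial, sqrt_mul_self_eq_abs]
  simp only [hquad, hdet]
  rw [integral_comp_mulVec ((isUnit_iff_isUnit_det B).1 hB).ne_zero fun v => exp (-(v ⬝ᵥ v) / 2),
    integral_exp_neg_dotProduct_self_div_two, smul_eq_mul]

end Gaussian

section Symbol

open Matrix

variable {d : ℕ} {a : (Fin d → ℤ) → ℝ}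

/-- The pairing `⟨z, θ⟩ = ∑ i, z i * θ i` of a lattice point `z` with a frequency `θ`, bundled as
a homomorphism in `z` because irreducibility of the walk is a statement about additive subgroups. -/
noncomputable def latticePairing {ι : Type*} [Fintype ι] (θ : ι → ℝ) : (ι → ℤ) →+ ℝ :=
  AddMonoidHom.mk' (fun z => ∑ i, (z i : ℝ) * θ i) fun x y => by
    simp [add_mul, Finset.sum_add_distrib]

lemma latticePairing_apply {ι : Type*} [Fintype ι] (θ : ι → ℝ) (z : ι → ℤ) :
    latticePairing θ z = ∑ i, (z i : ℝ) * θ i := rfl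

lemma latticePairing_smul {ι : Type*} [Fintype ι] (r : ℝ) (θ : ι → ℝ) (z : ι → ℤ) :
    latticePairing (r • θ) z = r * latticePairing θ z := by
  simp [latticePairing_apply, Finset.mul_sum, mul_left_comm]

lemma latticePairing_single {ι : Type*} [Fintype ι] [DecidableEq ι] (θ : ι → ℝ) (i : ι) :
    latticePairing θ (Pi.single i 1) = θ i := by
  simp [latticePairing_apply, Pi.single_apply]

lemma continuous_phiSymb (ha : Summable a) : Continuous (phiSymb d a) :=
  continuous_tsum (fun z => by fun_prop) ha.abs fun z θ => by
    rw [norm_mul, norm_eq_abs]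
    exact mul_le_of_le_one_right (abs_nonneg _) (abs_cos_le_one _)

lemma hasSum_mul_one_sub_cos (hsum : HasSum a 0) (θ : Fin d → ℝ) :
    HasSum (fun z => a z * (1 - cos (latticePairing θ z))) (-phiSymb d a θ) := by
  have hcos : Summable fun z => a z * cos (latticePairing θ z) :=
    hsum.summable.abs.of_norm_bounded fun z => by
      rw [norm_mul, norm_eq_abs]
      exact mul_le_of_le_one_right (abs_nonneg _) (abs_cos_le_one _)
  simp only [mul_sub, mul_one]
  rw [← zero_sub]
  exact hsum.sub hcos.hasSum

lemma mul_comp_latticePairing_nonneg (hpos : ∀ z, z ≠ 0 → 0 ≤ a z) {f : ℝ → ℝ}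
    (hf₀ : f 0 = 0) (hf : ∀ x, 0 ≤ f x) (θ : Fin d → ℝ) (z : Fin d → ℤ) :
    0 ≤ a z * f (latticePairing θ z) := by
  rcases eq_or_ne z 0 with rfl | hz
  · rw [map_zero, hf₀, mul_zero]
  · exact mul_nonneg (hpos z hz) (hf _)

lemma mul_one_sub_cos_nonneg (hpos : ∀ z, z ≠ 0 → 0 ≤ a z) (θ : Fin d → ℝ) (z : Fin d → ℤ) :
    0 ≤ a z * (1 - cos (latticePairing θ z)) :=
  mul_comp_latticePairing_nonneg hpos (f := fun x => 1 - cos x) (by simp)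
    (fun x => sub_nonneg.2 (cos_le_one x)) θ z

lemma phiSymb_nonpos (hpos : ∀ z, z ≠ 0 → 0 ≤ a z) (hsum : HasSum a 0) (θ : Fin d → ℝ) :
    phiSymb d a θ ≤ 0 :=
  neg_nonneg.1 ((hasSum_mul_one_sub_cos hsum θ).nonneg (mul_one_sub_cos_nonneg hpos θ))

-- The parallelogram inequality for `1 - e^{i(u+v)} = (1 - e^{iu}) + e^{iu} (1 - e^{iv})`.
lemma one_sub_cos_add_le (u v : ℝ) :
    1 - cos (u + v) ≤ 2 * ((1 - cos u) + (1 - cos v)) := by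
  rw [cos_add]
  nlinarith [sq_nonneg (cos u + cos v - 2), sq_nonneg (sin u - sin v), sin_sq_add_cos_sq u,
    sin_sq_add_cos_sq v]

lemma exists_one_sub_cos_le_mul_neg_phiSymb (hpos : ∀ z, z ≠ 0 → 0 ≤ a z) (hsum : HasSum a 0)
    {z : Fin d → ℤ} (hz : z ∈ AddSubgroup.closure {z | 0 < a z}) :
    ∃ C, 0 ≤ C ∧ ∀ θ, 1 - cos (latticePairing θ z) ≤ C * -phiSymb d a θ := by
  induction hz using AddSubgroup.closure_induction with
  | mem z hz =>
    have haz : 0 < a z := hz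
    refine ⟨(a z)⁻¹, by positivity, fun θ => ?_⟩
    rw [← div_eq_inv_mul, le_div_iff₀' haz]
    exact le_hasSum (hasSum_mul_one_sub_cos hsum θ) z fun w _ => mul_one_sub_cos_nonneg hpos θ w
  | zero => exact ⟨0, le_rfl, fun θ => by simp⟩
  | add x y _ _ hx hy =>
    obtain ⟨C, hC, hx⟩ := hx
    obtain ⟨D, hD, hy⟩ := hy
    refine ⟨2 * (C + D), by positivity, fun θ => ?_⟩
    rw [map_add]
    linarith [one_sub_cos_add_le (latticePairing θ x) (latticePairing θ y), hx θ, hy θ]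
  | neg x _ hx => simpa only [map_neg, cos_neg] using hx

/-- The cube `[-π, π]^d` of frequencies over which `ptrans` integrates. -/
abbrev frequencyCube (d : ℕ) : Set (Fin d → ℝ) :=
  Set.Icc (fun _ => -π) fun _ => π

lemma exists_phiSymb_le_neg_mul_dotProduct_self (hpos : ∀ z, z ≠ 0 → 0 ≤ a z)
    (hsum : HasSum a 0) (hirr : AddSubgroup.closure {z | 0 < a z} = ⊤) :
    ∃ c, 0 < c ∧ ∀ θ ∈ frequencyCube d, phiSymb d a θ ≤ -(c * (θ ⬝ᵥ θ)) := by
  choose C hC₀ hC using fun i : Fin d =>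
    exists_one_sub_cos_le_mul_neg_phiSymb hpos hsum (z := Pi.single i 1) (by simp [hirr])
  set S := ∑ i, C i
  have hS : 0 ≤ S := Finset.sum_nonneg fun i _ => hC₀ i
  refine ⟨2 / π ^ 2 / (1 + S), by positivity, fun θ hθ => ?_⟩
  have hcoord (i : Fin d) : 2 / π ^ 2 * θ i ^ 2 ≤ C i * -phiSymb d a θ := by
    have hcos := cos_le_one_sub_mul_cos_sq (abs_le.2 ⟨hθ.1 i, hθ.2 i⟩)
    have hphi := hC i θ
    rw [latticePairing_single] at hphi
    linarith
  have hquad : 2 / π ^ 2 * (θ ⬝ᵥ θ) ≤ (1 + S) * -phiSymb d a θ := by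
    calc 2 / π ^ 2 * (θ ⬝ᵥ θ) = ∑ i, 2 / π ^ 2 * θ i ^ 2 := by
          simp only [dotProduct, Finset.mul_sum, sq]
      _ ≤ ∑ i, C i * -phiSymb d a θ := Finset.sum_le_sum fun i _ => hcoord i
      _ = S * -phiSymb d a θ := (Finset.sum_mul ..).symm
      _ ≤ (1 + S) * -phiSymb d a θ := by
          have hphi := neg_nonneg.2 (phiSymb_nonpos hpos hsum θ)
          gcongr
          exact le_add_of_nonneg_left zero_le_one
  rw [le_neg, div_mul_eq_mul_div, div_le_iff₀' (by positivity)]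
  exact hquad

lemma summable_mul_coord_mul_coord (hvar : Summable fun z => (∑ i, (z i : ℝ) ^ 2) * a z)
    (i j : Fin d) : Summable fun z => a z * (z i : ℝ) * (z j : ℝ) := by
  refine hvar.abs.of_norm_bounded fun z => ?_
  have hle (k : Fin d) : (z k : ℝ) ^ 2 ≤ ∑ i, (z i : ℝ) ^ 2 :=
    Finset.single_le_sum (f := fun i => (z i : ℝ) ^ 2) (fun i _ => sq_nonneg _) (Finset.mem_univ k)
  have hij : |(z i : ℝ) * z j| ≤ ∑ i, (z i : ℝ) ^ 2 :=
    abs_le.2 ⟨by nlinarith [hle i, hle j, sq_nonneg ((z i : ℝ) + z j)],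
      by nlinarith [hle i, hle j, sq_nonneg ((z i : ℝ) - z j)]⟩
  calc ‖a z * z i * z j‖ = |(z i : ℝ) * z j| * |a z| := by
        rw [mul_assoc, norm_mul, norm_eq_abs, norm_eq_abs, mul_comm]
    _ ≤ (∑ i, (z i : ℝ) ^ 2) * |a z| := by gcongr
    _ = |(∑ i, (z i : ℝ) ^ 2) * a z| := by
        rw [abs_mul, abs_of_nonneg (Finset.sum_nonneg fun i _ => sq_nonneg (z i : ℝ))]

lemma hasSum_mul_latticePairing_sq (hvar : Summable fun z => (∑ i, (z i : ℝ) ^ 2) * a z)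
    (u : Fin d → ℝ) :
    HasSum (fun z => a z * latticePairing u z ^ 2) (-(u ⬝ᵥ hessPhi d a *ᵥ u)) := by
  have hentry (i j : Fin d) :
      HasSum (fun z => u i * (a z * z i * z j * u j)) (u i * (-hessPhi d a i j * u j)) := by
    rw [hessPhi, of_apply, neg_neg]
    exact ((summable_mul_coord_mul_coord hvar i j).hasSum.mul_right _).mul_left _
  convert! hasSum_sum (s := Finset.univ) fun i _ => hasSum_sum (s := Finset.univ)
    fun j _ => hentry i j using 1
  · ext z
    rw [latticePairing_apply, sq, Finset.sum_mul_sum, Finset.mul_sum]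
    refine Finset.sum_congr rfl fun i _ => ?_
    rw [Finset.mul_sum]
    exact Finset.sum_congr rfl fun j _ => by ring
  · simp only [dotProduct, mulVec, Finset.mul_sum, neg_mul, mul_neg, Finset.sum_neg_distrib]

lemma exists_latticePairing_ne_zero {ι : Type*} [Fintype ι] {S : Set (ι → ℤ)}
    (hS : AddSubgroup.closure S = ⊤) {u : ι → ℝ} (hu : u ≠ 0) :
    ∃ z ∈ S, latticePairing u z ≠ 0 := by
  classical
  by_contra! hzero
  have hpairing : latticePairing u = 0 := AddMonoidHom.eq_of_eqOn_dense hS hzero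
  exact hu (funext fun i => by rw [← latticePairing_single u i, hpairing]; rfl)

lemma posDef_neg_hessPhi (hpos : ∀ z, z ≠ 0 → 0 ≤ a z)
    (hvar : Summable fun z => (∑ i, (z i : ℝ) ^ 2) * a z)
    (hirr : AddSubgroup.closure {z | 0 < a z} = ⊤) : (-hessPhi d a).PosDef := by
  refine .of_dotProduct_mulVec_pos ?_ fun u hu => ?_
  · refine .neg (.ext fun i j => ?_)
    simp only [star_trivial, hessPhi, of_apply, mul_right_comm]
  · obtain ⟨z, hz, hzu⟩ := exists_latticePairing_ne_zero hirr hu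
    have haz : 0 < a z := hz
    rw [star_trivial, neg_mulVec, dotProduct_neg]
    calc 0 < a z * latticePairing u z ^ 2 := by positivity
      _ ≤ _ := le_hasSum (hasSum_mul_latticePairing_sq hvar u) z fun w _ =>
        mul_comp_latticePairing_nonneg hpos (f := (· ^ 2)) (by simp) (fun x => sq_nonneg x) u w

lemma tendsto_one_sub_cos_mul_div_sq (x : ℝ) :
    Tendsto (fun h : ℝ => (1 - cos (h * x)) / h ^ 2) (𝓝[≠] 0) (𝓝 (x ^ 2 / 2)) := by
  have hderiv : HasDerivAt (fun h : ℝ => sin (h * (x / 2))) (x / 2) 0 := by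
    simpa using ((hasDerivAt_id (0 : ℝ)).mul_const (x / 2)).sin
  have hlim := (hderiv.tendsto_slope_zero.pow 2).const_mul 2
  rw [show 2 * (x / 2) ^ 2 = x ^ 2 / 2 by ring] at hlim
  refine hlim.congr fun h => ?_
  have hcos : 1 - cos (h * x) = 2 * sin (h * (x / 2)) ^ 2 := by
    rw [sin_sq_eq_half_sub]
    ring_nf
  rw [hcos]
  simp only [zero_add, zero_mul, sin_zero, sub_zero, smul_eq_mul]
  ring

lemma abs_one_sub_cos_mul_div_sq_le (h x : ℝ) : |(1 - cos (h * x)) / h ^ 2| ≤ x ^ 2 / 2 := by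
  rw [abs_of_nonneg (div_nonneg (sub_nonneg.2 (cos_le_one _)) (sq_nonneg h))]
  refine div_le_of_le_mul₀ (sq_nonneg h) (by positivity) ?_
  linarith [one_sub_sq_div_two_le_cos (x := h * x), mul_pow h x 2]

lemma tendsto_phiSymb_smul_div_sq (hsum : HasSum a 0)
    (hvar : Summable fun z => (∑ i, (z i : ℝ) ^ 2) * a z) (u : Fin d → ℝ) :
    Tendsto (fun h : ℝ => phiSymb d a (h • u) / h ^ 2) (𝓝[≠] 0)
      (𝓝 ((u ⬝ᵥ hessPhi d a *ᵥ u) / 2)) := by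
  have hquad := hasSum_mul_latticePairing_sq hvar u
  have hlim : Tendsto (fun h : ℝ => ∑' z, a z * ((1 - cos (h * latticePairing u z)) / h ^ 2))
      (𝓝[≠] 0) (𝓝 (∑' z, a z * (latticePairing u z ^ 2 / 2))) := by
    refine tendsto_tsum_of_dominated_convergence (hquad.summable.abs.div_const 2)
      (fun z => (tendsto_one_sub_cos_mul_div_sq _).const_mul _) (.of_forall fun h z => ?_)
    rw [norm_mul, norm_eq_abs, norm_eq_abs, abs_mul, mul_div_assoc,
      abs_of_nonneg (sq_nonneg (latticePairing u z))]
    gcongr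
    exact abs_one_sub_cos_mul_div_sq_le h _
  convert hlim.neg using 1
  · ext h
    rw [← neg_neg (phiSymb d a _), ← (hasSum_mul_one_sub_cos hsum _).tsum_eq, neg_div,
      ← tsum_div_const]
    simp only [latticePairing_smul, mul_div_assoc]
  · simp only [← mul_div_assoc, tsum_div_const, hquad.tsum_eq, neg_div, neg_neg]

end Symbol

section TransitionProbability

open Matrix

variable {d : ℕ} {a : (Fin d → ℤ) → ℝ}

/-- The integrand of the transition probability `ptrans d a t x y`, extended by zero outside the
frequency cube so that it can be rescaled on all of `ℝ^d`. -/
noncomputable def ptransIntegrand (d : ℕ) (a : (Fin d → ℤ) → ℝ) (t : ℝ) (x y : Fin d → ℤ) :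
    (Fin d → ℝ) → ℝ :=
  (frequencyCube d).indicator fun θ =>
    exp (phiSymb d a θ * t) * cos (∑ i, θ i * ((y i : ℝ) - (x i : ℝ)))

lemma measurable_ptransIntegrand (ha : Summable a) (t : ℝ) (x y : Fin d → ℤ) :
    Measurable (ptransIntegrand d a t x y) := by
  have hphi := continuous_phiSymb ha
  exact Measurable.indicator (Continuous.measurable (by fun_prop)) measurableSet_Icc

lemma ptrans_eq_integral_ptransIntegrand (t : ℝ) (x y : Fin d → ℤ) :
    ptrans d a t x y = ((2 * π) ^ d)⁻¹ * ∫ θ, ptransIntegrand d a t x y θ := by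
  simp only [ptrans, ptransIntegrand, integral_indicator measurableSet_Icc]

lemma continuous_ptrans (ha : Summable a) (x y : Fin d → ℤ) :
    Continuous fun t => ptrans d a t x y := by
  have hphi := continuous_phiSymb ha
  refine continuous_const.mul (continuous_parametric_integral_of_continuous ?_ isCompact_Icc)
  simp only [Function.uncurry_def]
  fun_prop

lemma abs_exp_mul_cos_le (u v : ℝ) : |exp u * cos v| ≤ exp u := by
  rw [abs_mul, abs_exp]
  exact mul_le_of_le_one_right (exp_pos u).le (abs_cos_le_one v)

lemma abs_ptrans_le (hpos : ∀ z, z ≠ 0 → 0 ≤ a z) (hsum : HasSum a 0) {t : ℝ} (ht : 0 ≤ t)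
    (x y : Fin d → ℤ) :
    |ptrans d a t x y| ≤ ((2 * π) ^ d)⁻¹ * volume.real (frequencyCube d) := by
  rw [ptrans, abs_mul, abs_of_pos (by positivity)]
  gcongr
  rw [← one_mul (volume.real _), ← norm_eq_abs]
  refine norm_setIntegral_le_of_norm_le_const isCompact_Icc.measure_lt_top fun θ _ =>
    (abs_exp_mul_cos_le _ _).trans ?_
  exact exp_le_one_iff.2 (mul_nonpos_of_nonpos_of_nonneg (phiSymb_nonpos hpos hsum θ) ht)

lemma sqrt_pow_mul_ptrans {t : ℝ} (ht : 0 < t) (x y : Fin d → ℤ) :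
    √t ^ d * ptrans d a t x y =
      ((2 * π) ^ d)⁻¹ * ∫ u, ptransIntegrand d a t x y ((√t)⁻¹ • u) := by
  rw [Measure.integral_comp_smul, ptrans_eq_integral_ptransIntegrand, Module.finrank_fin_fun,
    inv_pow, inv_inv, abs_of_nonneg (by positivity), smul_eq_mul, mul_left_comm]

lemma abs_ptransIntegrand_inv_sqrt_smul_le {c : ℝ}
    (hc : ∀ θ ∈ frequencyCube d, phiSymb d a θ ≤ -(c * (θ ⬝ᵥ θ))) {t : ℝ} (ht : 0 < t)
    (x y : Fin d → ℤ) (u : Fin d → ℝ) :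
    |ptransIntegrand d a t x y ((√t)⁻¹ • u)| ≤ exp (-(c * (u ⬝ᵥ u))) := by
  by_cases hu : (√t)⁻¹ • u ∈ frequencyCube d
  · rw [ptransIntegrand, Set.indicator_of_mem hu]
    refine (abs_exp_mul_cos_le _ _).trans (exp_le_exp.2 ?_)
    calc phiSymb d a ((√t)⁻¹ • u) * t ≤ -(c * (((√t)⁻¹ • u) ⬝ᵥ ((√t)⁻¹ • u))) * t := by
          gcongr
          exact hc _ hu
      _ = -(c * (u ⬝ᵥ u)) := by
          rw [smul_dotProduct, dotProduct_smul, smul_smul, ← mul_inv, mul_self_sqrt ht.le,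
            smul_eq_mul]
          field_simp
  · rw [ptransIntegrand, Set.indicator_of_notMem hu, abs_zero]
    positivity

lemma tendsto_inv_sqrt_atTop : Tendsto (fun t : ℝ => (√t)⁻¹) atTop (𝓝[>] 0) :=
  tendsto_inv_atTop_nhdsGT_zero.comp tendsto_sqrt_atTop

lemma tendsto_ptransIntegrand_inv_sqrt_smul (hsum : HasSum a 0)
    (hvar : Summable fun z => (∑ i, (z i : ℝ) ^ 2) * a z) (x y : Fin d → ℤ) (u : Fin d → ℝ) :
    Tendsto (fun t => ptransIntegrand d a t x y ((√t)⁻¹ • u)) atTop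
      (𝓝 (exp ((u ⬝ᵥ hessPhi d a *ᵥ u) / 2))) := by
  have hzero : Tendsto (fun t : ℝ => (√t)⁻¹ • u) atTop (𝓝 0) := by
    simpa only [zero_smul] using (tendsto_inv_sqrt_atTop.mono_right inf_le_left).smul_const u
  have hcube : ∀ᶠ t : ℝ in atTop, (√t)⁻¹ • u ∈ frequencyCube d :=
    hzero.eventually (pi_Icc_mem_nhds' (fun _ => neg_lt_zero.2 pi_pos) fun _ => pi_pos)
  have hphi : Tendsto (fun t => phiSymb d a ((√t)⁻¹ • u) * t) atTop
      (𝓝 ((u ⬝ᵥ hessPhi d a *ᵥ u) / 2)) := by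
    refine ((tendsto_phiSymb_smul_div_sq hsum hvar u).comp
      (tendsto_inv_sqrt_atTop.mono_right (nhdsGT_le_nhdsNE 0))).congr' ?_
    filter_upwards [eventually_ge_atTop 0] with t ht
    rw [Function.comp_apply, inv_pow, sq_sqrt ht, div_inv_eq_mul]
  have hcos : Tendsto (fun t : ℝ => cos (∑ i, ((√t)⁻¹ • u) i * ((y i : ℝ) - (x i : ℝ)))) atTop
      (𝓝 1) := by
    have hcont : Continuous fun θ : Fin d → ℝ => cos (∑ i, θ i * ((y i : ℝ) - (x i : ℝ))) := by
      fun_prop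
    have hcos₀ : cos (∑ i, (0 : Fin d → ℝ) i * ((y i : ℝ) - (x i : ℝ))) = 1 := by simp
    rw [← hcos₀]
    exact (hcont.tendsto 0).comp hzero
  rw [← mul_one (exp _)]
  refine (((continuous_exp.tendsto _).comp hphi).mul hcos).congr' ?_
  filter_upwards [hcube] with t ht
  rw [ptransIntegrand, Set.indicator_of_mem ht, Function.comp_apply]

lemma inv_mul_integral_exp_hessPhi_eq_gammaConst (hH : (-hessPhi d a).PosDef) :
    ((2 * π) ^ d)⁻¹ * ∫ u, exp ((u ⬝ᵥ hessPhi d a *ᵥ u) / 2) = gammaConst d a := by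
  have hdet : |(hessPhi d a).det| = (-hessPhi d a).det := by
    rw [← abs_of_pos hH.det_pos, det_neg, abs_mul, abs_pow, abs_neg, abs_one, one_pow, one_mul]
  have hgauss := integral_exp_neg_quadratic_div_two hH
  simp only [neg_mulVec, dotProduct_neg, neg_neg, Fintype.card_fin] at hgauss
  have hpow : (2 * π) ^ d = √(2 * π) ^ d * √(2 * π) ^ d := by
    rw [← mul_pow, mul_self_sqrt two_pi_pos.le]
  have hsqrt : √(2 * π) ^ d ≠ 0 := by positivity
  rw [hgauss, gammaConst, hdet, rpow_div_two_eq_sqrt _ two_pi_pos.le, rpow_natCast, hpow]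
  field_simp

theorem tendsto_sqrt_pow_mul_ptrans (hpos : ∀ z, z ≠ 0 → 0 ≤ a z) (hsum : HasSum a 0)
    (hvar : Summable fun z => (∑ i, (z i : ℝ) ^ 2) * a z)
    (hirr : AddSubgroup.closure {z | 0 < a z} = ⊤) (x y : Fin d → ℤ) :
    Tendsto (fun t => √t ^ d * ptrans d a t x y) atTop (𝓝 (gammaConst d a)) := by
  obtain ⟨c, hc₀, hc⟩ := exists_phiSymb_le_neg_mul_dotProduct_self hpos hsum hirr
  have hlim : Tendsto (fun t => ∫ u, ptransIntegrand d a t x y ((√t)⁻¹ • u)) atTop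
      (𝓝 (∫ u, exp ((u ⬝ᵥ hessPhi d a *ᵥ u) / 2))) := by
    refine tendsto_integral_filter_of_dominated_convergence (fun u => exp (-(c * (u ⬝ᵥ u))))
      (.of_forall fun t => ?_) ?_ (integrable_exp_neg_mul_dotProduct_self hc₀)
      (.of_forall (tendsto_ptransIntegrand_inv_sqrt_smul hsum hvar x y))
    · exact ((measurable_ptransIntegrand hsum.summable t x y).comp
        (measurable_const_smul _)).aestronglyMeasurable
    · filter_upwards [eventually_gt_atTop 0] with t ht
      exact .of_forall (abs_ptransIntegrand_inv_sqrt_smul_le hc ht x y)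
  rw [← inv_mul_integral_exp_hessPhi_eq_gammaConst (posDef_neg_hessPhi hpos hvar hirr)]
  refine (hlim.const_mul _).congr' ?_
  filter_upwards [eventually_gt_atTop 0] with t ht
  rw [sqrt_pow_mul_ptrans ht]

end TransitionProbability

theorem Glam_asymptotic_d2_general {a : (Fin 2 → ℤ) → ℝ} (hpos : ∀ z, z ≠ 0 → 0 ≤ a z)
    (hsum : HasSum a 0) (hvar : Summable fun z => (∑ i, (z i : ℝ) ^ 2) * a z)
    (hirr : AddSubgroup.closure {z | 0 < a z} = ⊤) (x y : Fin 2 → ℤ) :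
    Tendsto (fun lam => Glam 2 a lam x y / log (1 / lam)) (𝓝[>] 0) (𝓝 (gammaConst 2 a)) := by
  refine tendsto_laplace_div_log (continuous_ptrans hsum.summable x y).measurable
    (fun t ht => abs_ptrans_le hpos hsum ht.le x y) ?_
  refine (tendsto_sqrt_pow_mul_ptrans hpos hsum hvar hirr x y).congr' ?_
  filter_upwards [eventually_ge_atTop 0] with t ht
  rw [sq_sqrt ht]

/-- For `d = 2`: `G_λ(0,0) ~ γ₂ ln(1/λ)` as `λ → 0+`. -/
theorem Glam_asymptotic_d2
    (a : (Fin 2 → ℤ) → ℝ)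
    (hpos : ∀ z : Fin 2 → ℤ, z ≠ 0 → 0 ≤ a z)
    (hneg : a 0 < 0)
    (hsymm : ∀ z : Fin 2 → ℤ, a (-z) = a z)
    (hsum : HasSum a 0)
    (hvar : Summable fun z : Fin 2 → ℤ => (∑ i, ((z i : ℝ)) ^ 2) * a z)
    (hirr : AddSubgroup.closure {z : Fin 2 → ℤ | 0 < a z} = ⊤)
    : Tendsto (fun lam : ℝ => Glam 2 a lam 0 0 / Real.log (1 / lam)) (𝓝[>] (0 : ℝ))
      (𝓝 (gammaConst 2 a)) :=
  Glam_asymptotic_d2_general hpos hsum hvar hirr 0 0
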